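/- arXiv:math/0703546 — 4 statements merged into one kernel-verified Lean document; each statement's English description precedes it below -/
import Mathlib

section
/- The inverse of the generalized quantum Hilbert matrix H_n^{(α)}(q) = ([α]_q/[l+j+α]_q)_{0≤l,j≤n} has (l,j)-entry (−1)^{l+j} ([l+j+α]_q/[α]_q) (n+l+α choose n−j)_q (n+j+α choose n−l)_q (l+j+α−1 choose l)_q (l+j+α−1 choose j)_q; in particular H_n^{(α)}(q) is invertible. -/
noncomputable def qint (s : ℂ) (m : ℕ) : ℂ := (s ^ m - s⁻¹ ^ m) / (s - s⁻¹)

noncomputable def qbinom (s : ℂ) (m k : ℕ) : ℂ :=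
  ∏ j ∈ Finset.range k, qint s (m - j) / qint s (j + 1)

noncomputable def qfac (s : ℂ) (m : ℕ) : ℂ := ∏ i ∈ Finset.range m, qint s (i + 1)

noncomputable def qdiff (s : ℂ) (k i : ℕ) : ℂ := (s ^ k * s⁻¹ ^ i - s ^ i * s⁻¹ ^ k) / (s - s⁻¹)

lemma qfac_succ (s : ℂ) (m : ℕ) : qfac s (m + 1) = qfac s m * qint s (m + 1) := by
  simp [qfac, Finset.prod_range_succ]

lemma qfac_ne (s : ℂ) (N m : ℕ) (hq : ∀ i, 1 ≤ i → i ≤ N → qint s i ≠ 0) (hm : m ≤ N) :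
    qfac s m ≠ 0 := by
  unfold qfac
  rw [Finset.prod_ne_zero_iff]
  intro i hi
  rw [Finset.mem_range] at hi
  exact hq _ (by omega) (by omega)

lemma qfac_add (s : ℂ) (a b : ℕ) :
    qfac s (a + b) = qfac s a * ∏ i ∈ Finset.range b, qint s (a + i + 1) := by
  simp [qfac, Finset.prod_range_add]

lemma qbinom_eq (s : ℂ) (m a b : ℕ) (hm : m = a + b) (ha : qfac s a ≠ 0) (hb : qfac s b ≠ 0) :
    qbinom s m b = qfac s m / (qfac s a * qfac s b) := by
  subst hm
  have h1 : qbinom s (a + b) b = (∏ i ∈ Finset.range b, qint s (a + i + 1)) / qfac s b := by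
    unfold qbinom
    rw [Finset.prod_div_distrib]
    congr 1
    rw [← Finset.prod_range_reflect]
    apply Finset.prod_congr rfl
    intro i hi
    rw [Finset.mem_range] at hi
    congr 1
    omega
  rw [h1, qfac_add]
  field_simp

lemma prod_erase_split (f : ℕ → ℂ) (k m : ℕ) :
    ∏ i ∈ (Finset.range (k + m + 1)).erase k, f i
      = (∏ i ∈ Finset.range k, f i) * ∏ i ∈ Finset.range m, f (k + 1 + i) := by
  have h : (Finset.range (k + m + 1)).erase k
      = Finset.range k ∪ Finset.Ico (k + 1) (k + m + 1) := by
    ext i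
    simp only [Finset.mem_erase, Finset.mem_range, Finset.mem_union, Finset.mem_Ico]
    omega
  rw [h, Finset.prod_union, Finset.prod_Ico_eq_prod_range]
  · congr 2
    congr 1
    omega
  · rw [Finset.disjoint_left]
    intro i
    simp only [Finset.mem_range, Finset.mem_Ico]
    omega

lemma qdiff_prod (s : ℂ) (hs : s ≠ 0) (k m : ℕ) :
    ∏ i ∈ (Finset.range (k + m + 1)).erase k, qdiff s k i
      = (-1) ^ m * (qfac s k * qfac s m) := by
  rw [prod_erase_split]
  have h1 : ∏ i ∈ Finset.range k, qdiff s k i = qfac s k := by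
    unfold qfac
    rw [← Finset.prod_range_reflect]
    apply Finset.prod_congr rfl
    intro i hi
    rw [Finset.mem_range] at hi
    obtain ⟨c, rfl⟩ : ∃ c, k = i + 1 + c := ⟨k - (i + 1), by omega⟩
    have : i + 1 + c - 1 - i = c := by omega
    rw [this]
    unfold qdiff qint
    congr 1
    simp only [pow_add, inv_pow]
    field_simp
  have h2 : ∏ i ∈ Finset.range m, qdiff s k (k + 1 + i) = (-1) ^ m * qfac s m := by
    unfold qfac
    have : ((-1 : ℂ)) ^ m = ∏ i ∈ Finset.range m, (-1 : ℂ) := by simp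
    rw [this, ← Finset.prod_mul_distrib]
    apply Finset.prod_congr rfl
    intro i hi
    unfold qdiff qint
    rw [← mul_div_assoc]
    congr 1
    simp only [pow_add, inv_pow]
    field_simp
    ring
  rw [h1, h2]
  ring

/-- Signed coefficient. -/
noncomputable def coefA (s : ℂ) (n α k : ℕ) : ℂ :=
  (∏ i ∈ Finset.range (n + 1), qint s (k + i + α)) /
    ∏ i ∈ (Finset.range (n + 1)).erase k, qdiff s k i

lemma coefA_eq (s : ℂ) (hs : s ≠ 0) (k m β : ℕ) (h : qfac s (k + β) ≠ 0) :
    coefA s (k + m) (β + 1) k = (-1) ^ m * (qfac s (k + m + k + β + 1) /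
      (qfac s m * qfac s k * qfac s (k + β))) := by
  unfold coefA
  rw [qdiff_prod s hs]
  have e : k + m + k + β + 1 = (k + β) + (k + m + 1) := by ring
  have e2 : ((-1 : ℂ) ^ m)⁻¹ = (-1) ^ m := by
    rw [← inv_pow]; norm_num
  rw [e, qfac_add]
  have e3 : ∏ i ∈ Finset.range (k + m + 1), qint s (k + i + (β + 1))
      = ∏ i ∈ Finset.range (k + m + 1), qint s (k + β + i + 1) := by
    apply Finset.prod_congr rfl
    intro i _
    congr 1
    ring
  rw [e3, div_eq_mul_inv, mul_inv, e2]
  field_simp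

lemma B_eq (s : ℂ) (hs : s ≠ 0) (n β k j : ℕ) (hk : k ≤ n) (hj : j ≤ n)
    (hq : ∀ i, 1 ≤ i → i ≤ 2 * n + β + 1 → qint s i ≠ 0) :
    (-1 : ℂ) ^ (k + j) * (qint s (k + j + (β + 1)) / qint s (β + 1)) *
        (qbinom s (n + k + (β + 1)) (n - j) * qbinom s (n + j + (β + 1)) (n - k) *
          qbinom s (k + j + (β + 1) - 1) k *
          qbinom s (k + j + (β + 1) - 1) j)
    = coefA s n (β + 1) k * coefA s n (β + 1) j /
      (qint s (β + 1) * qint s (k + j + (β + 1))) := by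
  have hf : ∀ m, m ≤ 2 * n + β + 1 → qfac s m ≠ 0 := fun m hm => qfac_ne s _ m hq hm
  obtain ⟨a, ha⟩ : ∃ a, n = k + a := ⟨n - k, by omega⟩
  obtain ⟨b, hb⟩ : ∃ b, n = j + b := ⟨n - j, by omega⟩
  have hA : coefA s n (β + 1) k = (-1) ^ a * (qfac s (n + k + (β + 1)) /
      (qfac s a * qfac s k * qfac s (k + β))) := by
    have := coefA_eq s hs k a β (hf _ (by omega))
    rw [← ha] at this
    exact this
  have hA' : coefA s n (β + 1) j = (-1) ^ b * (qfac s (n + j + (β + 1)) /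
      (qfac s b * qfac s j * qfac s (j + β))) := by
    have := coefA_eq s hs j b β (hf _ (by omega))
    rw [← hb] at this
    exact this
  have na : n - k = a := by omega
  have nb : n - j = b := by omega
  have ns : k + j + (β + 1) - 1 = k + j + β := by omega
  have q5 : qfac s (k + j + β + 1) = qfac s (k + j + β) * qint s (k + j + (β + 1)) :=
    qfac_succ s _
  rw [na, nb, ns, hA, hA',
    qbinom_eq s (n + k + (β + 1)) (k + j + β + 1) b (by omega) (hf _ (by omega)) (hf _ (by omega)),
    qbinom_eq s (n + j + (β + 1)) (k + j + β + 1) a (by omega) (hf _ (by omega)) (hf _ (by omega)),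
    qbinom_eq s (k + j + β) (j + β) k (by omega) (hf _ (by omega)) (hf _ (by omega)),
    qbinom_eq s (k + j + β) (k + β) j (by omega) (hf _ (by omega)) (hf _ (by omega)), q5]
  have sgn : (-1 : ℂ) ^ (k + j) = (-1) ^ a * (-1) ^ b := by
    have : (-1 : ℂ) ^ (k + j) * ((-1) ^ a * (-1) ^ b) = 1 := by
      rw [← pow_add, ← pow_add]
      exact Even.neg_one_pow ⟨n, by omega⟩
    have h2 : ((-1 : ℂ) ^ a * (-1) ^ b) * ((-1) ^ a * (-1) ^ b) = 1 := by
      rw [← pow_add, ← pow_add]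
      exact Even.neg_one_pow ⟨a + b, by omega⟩
    linear_combination ((-1) ^ a * (-1) ^ b) * this - (-1) ^ (k + j) * h2
  rw [sgn]
  have h1 := hf a (by omega)
  have h2 := hf b (by omega)
  have h3 := hf k (by omega)
  have h4 := hf j (by omega)
  have h5 := hf (k + β) (by omega)
  have h6 := hf (j + β) (by omega)
  have h7 := hf (k + j + β) (by omega)
  have h8 := hq (k + j + (β + 1)) (by omega) (by omega)
  have h9 := hq (β + 1) (by omega) (by omega)
  field_simp

noncomputable def ny (s : ℂ) (k : ℕ) : ℂ := s ^ (2 * k)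

noncomputable def nc (s : ℂ) (α i : ℕ) : ℂ := s⁻¹ ^ (2 * (i + α))

lemma ny_sub_nc (s : ℂ) (hs : s ≠ 0) (hd : s - s⁻¹ ≠ 0) (α k i : ℕ) :
    ny s k - nc s α i = s ^ k * s⁻¹ ^ (i + α) * (s - s⁻¹) * qint s (k + i + α) := by
  unfold ny nc qint
  rw [mul_assoc _ (s - s⁻¹), mul_div_cancel₀ _ hd]
  simp only [inv_pow, pow_add, two_mul]
  field_simp

lemma ny_sub_ny (s : ℂ) (hs : s ≠ 0) (hd : s - s⁻¹ ≠ 0) (k i : ℕ) :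
    ny s k - ny s i = s ^ k * s ^ i * (s - s⁻¹) * qdiff s k i := by
  unfold ny qdiff
  rw [mul_assoc _ (s - s⁻¹), mul_div_cancel₀ _ hd]
  simp only [inv_pow, pow_add, two_mul]
  field_simp

lemma nc_sub_nc (s : ℂ) (hs : s ≠ 0) (hd : s - s⁻¹ ≠ 0) (α k i : ℕ) :
    nc s α k - nc s α i = - (s⁻¹ ^ (k + α) * s⁻¹ ^ (i + α) * (s - s⁻¹) * qdiff s k i) := by
  unfold nc qdiff
  rw [mul_assoc _ (s - s⁻¹), mul_div_cancel₀ _ hd]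
  simp only [inv_pow, pow_add, two_mul]
  field_simp
  ring

noncomputable def Rr (s : ℂ) (n α : ℕ) : ℂ := ∏ i ∈ Finset.range (n + 1), s ^ (2 * i + α)

lemma lemW (s : ℂ) (hs : s ≠ 0) (hd : s - s⁻¹ ≠ 0) (n α k : ℕ) (hk : k ≤ n) :
    (∏ i ∈ Finset.range (n + 1), (ny s k - nc s α i)) *
      Lagrange.nodalWeight (Finset.range (n + 1)) (ny s) k * Rr s n α
      = (s - s⁻¹) * s ^ (2 * k) * coefA s n α k := by
  have hm : k ∈ Finset.range (n + 1) := Finset.mem_range.2 (by omega)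
  unfold Lagrange.nodalWeight Rr coefA
  rw [← Finset.mul_prod_erase _ (fun i => ny s k - nc s α i) hm,
    ← Finset.mul_prod_erase _ (fun i => s ^ (2 * i + α)) hm,
    ← Finset.mul_prod_erase _ (fun i => qint s (k + i + α)) hm]
  have key : (∏ i ∈ (Finset.range (n + 1)).erase k, (ny s k - nc s α i)) *
      (∏ i ∈ (Finset.range (n + 1)).erase k, (ny s k - ny s i)⁻¹) *
      (∏ i ∈ (Finset.range (n + 1)).erase k, s ^ (2 * i + α)) =
      (∏ i ∈ (Finset.range (n + 1)).erase k, qint s (k + i + α)) /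
      (∏ i ∈ (Finset.range (n + 1)).erase k, qdiff s k i) := by
    rw [← Finset.prod_mul_distrib, ← Finset.prod_mul_distrib, ← Finset.prod_div_distrib]
    apply Finset.prod_congr rfl
    intro i _
    rw [ny_sub_nc s hs hd, ny_sub_ny s hs hd, mul_inv, div_eq_mul_inv]
    generalize (qdiff s k i)⁻¹ = e
    generalize qint s (k + i + α) = f
    generalize s - s⁻¹ = d at hd ⊢
    simp only [inv_pow, pow_add, two_mul]
    field_simp
  have head : (ny s k - nc s α k) * s ^ (2 * k + α)
      = (s - s⁻¹) * s ^ (2 * k) * qint s (k + k + α) := by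
    rw [ny_sub_nc s hs hd]
    generalize qint s (k + k + α) = f
    generalize s - s⁻¹ = d at hd ⊢
    simp only [inv_pow, pow_add, two_mul]
    field_simp
  rw [mul_div_assoc, ← key]
  linear_combination (∏ i ∈ (Finset.range (n + 1)).erase k, (ny s k - nc s α i)) *
      (∏ i ∈ (Finset.range (n + 1)).erase k, (ny s k - ny s i)⁻¹) *
      (∏ i ∈ (Finset.range (n + 1)).erase k, s ^ (2 * i + α)) * head

lemma lemN (s : ℂ) (hs : s ≠ 0) (hd : s - s⁻¹ ≠ 0) (n α j : ℕ) (hj : j ≤ n) :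
    (∏ i ∈ Finset.range (n + 1), (nc s α j - ny s i)) *
      (∏ i ∈ (Finset.range (n + 1)).erase j, (nc s α j - nc s α i))⁻¹ * s ^ (2 * j + α) * s ^ α
      = - ((s - s⁻¹) * Rr s n α * coefA s n α j) := by
  have hm : j ∈ Finset.range (n + 1) := Finset.mem_range.2 (by omega)
  unfold Rr coefA
  rw [← Finset.mul_prod_erase _ (fun i => nc s α j - ny s i) hm,
    ← Finset.mul_prod_erase _ (fun i => s ^ (2 * i + α)) hm,
    ← Finset.mul_prod_erase _ (fun i => qint s (j + i + α)) hm]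
  have key : (∏ i ∈ (Finset.range (n + 1)).erase j, (nc s α j - ny s i)) *
      (∏ i ∈ (Finset.range (n + 1)).erase j, (nc s α j - nc s α i))⁻¹ =
      (∏ i ∈ (Finset.range (n + 1)).erase j, s ^ (2 * i + α)) *
      ((∏ i ∈ (Finset.range (n + 1)).erase j, qint s (j + i + α)) /
      (∏ i ∈ (Finset.range (n + 1)).erase j, qdiff s j i)) := by
    rw [← Finset.prod_inv_distrib, ← Finset.prod_mul_distrib, ← Finset.prod_div_distrib,
      ← Finset.prod_mul_distrib]
    apply Finset.prod_congr rfl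
    intro i _
    rw [← neg_sub (ny s i), ny_sub_nc s hs hd, nc_sub_nc s hs hd, inv_neg, mul_inv,
      div_eq_mul_inv, add_comm i j]
    generalize (qdiff s j i)⁻¹ = e
    generalize qint s (j + i + α) = f
    generalize s - s⁻¹ = d at hd ⊢
    simp only [inv_pow, pow_add, two_mul]
    field_simp
  have head : (nc s α j - ny s j) * s ^ α
      = - ((s - s⁻¹) * qint s (j + j + α)) := by
    rw [← neg_sub (ny s j), ny_sub_nc s hs hd]
    generalize qint s (j + j + α) = f
    generalize s - s⁻¹ = d at hd ⊢
    simp only [inv_pow, pow_add, two_mul]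
    field_simp
  rw [mul_div_assoc]
  linear_combination (nc s α j - ny s j) * s ^ (2 * j + α) * s ^ α * key +
    s ^ (2 * j + α) * (∏ i ∈ (Finset.range (n + 1)).erase j, s ^ (2 * i + α)) *
      ((∏ i ∈ (Finset.range (n + 1)).erase j, qint s (j + i + α)) /
      (∏ i ∈ (Finset.range (n + 1)).erase j, qdiff s j i)) * head

lemma pow_sq_ne (s : ℂ) (hs : s ≠ 0) (N : ℕ) (hroot : ∀ m : ℕ, 1 ≤ m → m ≤ N → (s ^ 2) ^ m ≠ 1)
    (i j : ℕ) (hi : i ≤ N) (hj : j ≤ N) (h : s ^ (2 * i) = s ^ (2 * j)) : i = j := by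
  wlog hij : i ≤ j generalizing i j
  · exact (this j i hj hi h.symm (by omega)).symm
  by_contra hne
  obtain ⟨c, rfl⟩ : ∃ c, j = i + c := ⟨j - i, by omega⟩
  apply hroot c (by omega) (by omega)
  have h0 : s ^ (2 * i) ≠ 0 := pow_ne_zero _ hs
  apply mul_left_cancel₀ h0
  rw [← pow_mul, ← pow_add, mul_one, h]
  congr 1
  ring

lemma key_sum (s : ℂ) (hs : s ≠ 0) (hd : s - s⁻¹ ≠ 0) (n α l j : ℕ) (hl : l ≤ n) (hj : j ≤ n)
    (hroot : ∀ m : ℕ, 1 ≤ m → m ≤ 2 * n + α → (s ^ 2) ^ m ≠ 1)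
    (hq : ∀ i, 1 ≤ i → i ≤ 2 * n + α → qint s i ≠ 0) (hα : 1 ≤ α) :
    ∑ k ∈ Finset.range (n + 1), coefA s n α k * coefA s n α j /
      (qint s (l + k + α) * qint s (k + j + α)) = if l = j then 1 else 0 := by
  have hyc : ∀ k i, k ≤ n → i ≤ n → ny s k - nc s α i ≠ 0 := by
    intro k i hk hi
    rw [ny_sub_nc s hs hd]
    have := hq (k + i + α) (by omega) (by omega)
    positivity
  have hinj : Set.InjOn (ny s) (Finset.range (n + 1)) := by
    intro a ha b hb h
    simp only [Finset.coe_range, Set.mem_Iio] at ha hb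
    exact pow_sq_ne s hs _ hroot a b (by omega) (by omega) h
  have hcne : ∀ i, i ≤ n → i ≠ j → nc s α j - nc s α i ≠ 0 := by
    intro i hi hne h
    apply hne
    have h' : nc s α j = nc s α i := sub_eq_zero.1 h
    unfold nc at h'
    rw [inv_pow, inv_pow, inv_inj] at h'
    have h2 : s ^ (2 * j) = s ^ (2 * i) := by
      rw [mul_add, mul_add, pow_add, pow_add] at h'
      exact mul_right_cancel₀ (pow_ne_zero _ hs) h'
    exact (pow_sq_ne s hs _ hroot j i (by omega) (by omega) h2).symm
  set P := ∏ i ∈ (Finset.range (n + 1)).erase j, (nc s α j - nc s α i) with hP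
  have hP0 : P ≠ 0 := by
    rw [hP, Finset.prod_ne_zero_iff]
    intro i hi
    rw [Finset.mem_erase, Finset.mem_range] at hi
    exact hcne i (by omega) hi.1
  have hml : l ∈ Finset.range (n + 1) := Finset.mem_range.2 (by omega)
  have hmj : j ∈ Finset.range (n + 1) := Finset.mem_range.2 (by omega)
  set f := Lagrange.nodal ((Finset.range (n + 1)).erase l) (nc s α) with hf
  have hdeg : f.degree < (Finset.range (n + 1)).card := by
    rw [hf, Lagrange.degree_nodal, Finset.card_erase_of_mem hml, Finset.card_range]
    exact_mod_cast Nat.lt_succ_self n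
  have hL : f.eval (nc s α j) = (∏ i ∈ Finset.range (n + 1), (nc s α j - ny s i)) *
      ∑ k ∈ Finset.range (n + 1), Lagrange.nodalWeight (Finset.range (n + 1)) (ny s) k *
        (nc s α j - ny s k)⁻¹ * f.eval (ny s k) := by
    conv_lhs => rw [Lagrange.eq_interpolate hinj hdeg]
    rw [Lagrange.eval_interpolate_not_at_node, Lagrange.eval_nodal]
    intro i hi h
    rw [Finset.mem_range] at hi
    exact hyc i j (by omega) hj (by rw [h, sub_self])
  have hfj : f.eval (nc s α j) * P⁻¹ = if l = j then 1 else 0 := by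
    rw [hf, Lagrange.eval_nodal]
    split_ifs with h
    · subst h
      exact mul_inv_cancel₀ hP0
    · rw [Finset.prod_eq_zero (i := j), zero_mul]
      · exact Finset.mem_erase.2 ⟨fun h' => h h'.symm, hmj⟩
      · exact sub_self _
  have hR : Rr s n α ≠ 0 := by
    unfold Rr
    rw [Finset.prod_ne_zero_iff]
    intro i _
    exact pow_ne_zero _ hs
  have term : ∀ k ∈ Finset.range (n + 1), s ^ l * (coefA s n α k * coefA s n α j /
      (qint s (l + k + α) * qint s (k + j + α))) =
      s ^ j * ((∏ i ∈ Finset.range (n + 1), (nc s α j - ny s i)) * P⁻¹ *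
       (Lagrange.nodalWeight (Finset.range (n + 1)) (ny s) k *
        (nc s α j - ny s k)⁻¹ * f.eval (ny s k))) := by
    intro k hk
    rw [Finset.mem_range] at hk
    have hW := lemW s hs hd n α k (by omega)
    have hN := lemN s hs hd n α j hj
    rw [← hP] at hN
    rw [← Finset.mul_prod_erase _ (fun i => ny s k - nc s α i) hml, ← Lagrange.eval_nodal, ← hf] at hW
    have e1 := ny_sub_nc s hs hd α k l
    have e2 := ny_sub_nc s hs hd α k j
    have z1 := hq (k + l + α) (by omega) (by omega)
    have z2 := hq (k + j + α) (by omega) (by omega)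
    rw [e1] at hW
    rw [← neg_sub (ny s k), e2, add_comm l k]
    generalize (∏ i ∈ Finset.range (n + 1), (nc s α j - ny s i)) * P⁻¹ = NP at *
    generalize Lagrange.nodalWeight (Finset.range (n + 1)) (ny s) k = w at *
    generalize Polynomial.eval (ny s k) f = g at *
    generalize coefA s n α k = A at *
    generalize coefA s n α j = B at *
    generalize Rr s n α = R at *
    generalize qint s (k + l + α) = u at *
    generalize qint s (k + j + α) = v at *
    generalize s - s⁻¹ = d at *
    have hB : B = - (NP * s ^ (2 * j + α) * s ^ α) / (d * R) := by
      rw [hN]; field_simp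
    have hA : A = (s ^ k * s⁻¹ ^ (l + α) * d * u * g * w * R) / (d * s ^ (2 * k)) := by
      rw [hW]; field_simp
    rw [hA, hB]
    simp only [inv_pow, pow_add, two_mul]
    field_simp
  have tot : s ^ l * (∑ k ∈ Finset.range (n + 1), coefA s n α k * coefA s n α j /
      (qint s (l + k + α) * qint s (k + j + α))) = s ^ j * (if l = j then 1 else 0) := by
    rw [Finset.mul_sum, Finset.sum_congr rfl term, ← Finset.mul_sum, ← Finset.mul_sum, ← hfj, hL]
    ring
  apply mul_left_cancel₀ (pow_ne_zero l hs)
  rw [tot]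
  split_ifs with h
  · rw [h]
  · simp

theorem inverse_quantum_Hilbert (s : ℂ) (hs0 : s ≠ 0) (n α : ℕ) (hα : 1 ≤ α)
    (hroot : ∀ m : ℕ, 1 ≤ m → m ≤ 2 * n + α → (s ^ 2) ^ m ≠ 1)
    (H B : Matrix (Fin (n + 1)) (Fin (n + 1)) ℂ)
    (hH : ∀ l j : Fin (n + 1), H l j = qint s α / qint s ((l : ℕ) + (j : ℕ) + α))
    (hB : ∀ l j : Fin (n + 1), B l j =
      (-1 : ℂ) ^ ((l : ℕ) + (j : ℕ)) * (qint s ((l : ℕ) + (j : ℕ) + α) / qint s α) *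
        (qbinom s (n + (l : ℕ) + α) (n - (j : ℕ)) * qbinom s (n + (j : ℕ) + α) (n - (l : ℕ)) *
          qbinom s ((l : ℕ) + (j : ℕ) + α - 1) (l : ℕ) *
          qbinom s ((l : ℕ) + (j : ℕ) + α - 1) (j : ℕ))) :
    H * B = 1 ∧ B * H = 1 := by
  have hd : s - s⁻¹ ≠ 0 := by
    intro h
    apply hroot 1 le_rfl (by omega)
    have h1 : s = s⁻¹ := sub_eq_zero.1 h
    rw [pow_one, pow_two]
    nth_rewrite 2 [h1]
    exact mul_inv_cancel₀ hs0
  have hq : ∀ i, 1 ≤ i → i ≤ 2 * n + α → qint s i ≠ 0 := by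
    intro i h1 h2 h
    apply hroot i h1 h2
    unfold qint at h
    rw [div_eq_zero_iff] at h
    have h3 : s ^ i = s⁻¹ ^ i := sub_eq_zero.1 (h.resolve_right hd)
    rw [← pow_mul, mul_comm, pow_mul, pow_two]
    nth_rewrite 2 [h3]
    rw [← mul_pow, mul_inv_cancel₀ hs0, one_pow]
  have main : H * B = 1 := by
    ext l j
    rw [Matrix.mul_apply, Matrix.one_apply]
    have hk := key_sum s hs0 hd n α l j (by omega) (by omega) hroot hq hα
    rw [Finset.sum_range] at hk
    simp only [Fin.ext_iff]
    rw [← hk]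
    apply Finset.sum_congr rfl
    intro k _
    rw [hH, hB]
    obtain ⟨β, rfl⟩ : ∃ β, α = β + 1 := ⟨α - 1, by omega⟩
    rw [B_eq s hs0 n β k j (by omega) (by omega) hq]
    have z1 := hq (β + 1) (by omega) (by omega)
    field_simp
  exact ⟨main, mul_eq_one_comm.1 main⟩
end

section
/- The inverse of the matrix A = (1/F_{l+j+α}(θ))_{0≤l,j≤n} has (l,j)-entry (−1)^{n(l+j+α) − C(l,2) − C(j,2)} F_{l+j+α}(θ) (n+l+α choose n−j)_{F(θ)} (n+j+α choose n−l)_{F(θ)} (l+j+α−1 choose l)_{F(θ)} (l+j+α−1 choose j)_{F(θ)}, where C(m,2) = m(m−1)/2. -/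
noncomputable def genFib (θ : ℝ) (m : ℕ) : ℝ :=
  (Real.exp (m * θ) - (-1 : ℝ) ^ m * Real.exp (-(m * θ))) / (Real.exp θ + Real.exp (-θ))

noncomputable def fibinom (θ : ℝ) (n k : ℕ) : ℝ :=
  ∏ j ∈ Finset.range k, genFib θ (n - j) / genFib θ (j + 1)

open Finset

namespace Filb

noncomputable def G (x b : ℝ) (z : ℤ) : ℝ := (x ^ z - b ^ z) / (x - b)

theorem lagr (n l : ℕ) (hl : l ∈ range (n + 1)) (u : ℝ) (c d : ℕ → ℝ) (y : ℝ)
    (hu : Set.InjOn (fun m : ℕ => u ^ m) (range (n + 1))) :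
    ∏ m ∈ (range (n + 1)).erase l, (c m * y - d m) =
      ∑ k ∈ range (n + 1), (∏ m ∈ (range (n + 1)).erase l, (c m * u ^ k - d m)) *
        ∏ m ∈ (range (n + 1)).erase k, ((y - u ^ m) / (u ^ k - u ^ m)) := by
  classical
  let Q : Polynomial ℝ := ∏ m ∈ (range (n + 1)).erase l,
    (Polynomial.C (c m) * Polynomial.X - Polynomial.C (d m))
  have hev : ∀ z, Q.eval z = ∏ m ∈ (range (n + 1)).erase l, (c m * z - d m) := by
    intro z
    simp [Q, Polynomial.eval_prod]
  have hdeg : Q.degree < (range (n + 1)).card := by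
    have h1 : Q.natDegree ≤ n := by
      refine (Polynomial.natDegree_prod_le _ _).trans ?_
      refine (Finset.sum_le_card_nsmul _ _ 1 ?_).trans ?_
      · intro m _
        have := Polynomial.natDegree_linear_le (a := c m) (b := - d m)
        simpa [sub_eq_add_neg] using this
      · rw [card_erase_of_mem hl]; simp
    refine Polynomial.degree_le_natDegree.trans_lt ?_
    rw [card_range]
    exact_mod_cast Nat.lt_succ_of_le h1
  have h := congrArg (Polynomial.eval y) (Lagrange.eq_interpolate hu hdeg)
  rw [Lagrange.interpolate_apply, Polynomial.eval_finsetSum, hev] at h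
  rw [h]
  refine sum_congr rfl fun k _ => ?_
  rw [Polynomial.eval_mul, Polynomial.eval_C, hev, Lagrange.basis, Polynomial.eval_prod]
  congr 1
  refine prod_congr rfl fun m _ => ?_
  simp [Lagrange.basisDivisor, div_eq_inv_mul]

theorem G_shift (x b : ℝ) (hx : x ≠ 0) (hb : b ≠ 0) (t s : ℤ) :
    G x b (t + s) = b ^ t * (x ^ s * (x / b) ^ t - b ^ s) / (x - b) := by
  unfold G
  rw [div_zpow, zpow_add₀ hx, zpow_add₀ hb]
  have := zpow_ne_zero t hb
  field_simp

theorem G_diff (x b : ℝ) (hx : x ≠ 0) (hb : b ≠ 0) (t : ℤ) (m : ℕ) :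
    G x b (t - m) = b ^ t * x ^ (-(m : ℤ)) * ((x / b) ^ t - (x / b) ^ m) / (x - b) := by
  rw [sub_eq_add_neg, G_shift x b hx hb]
  rw [zpow_neg, zpow_neg, zpow_natCast, zpow_natCast, div_pow]
  have := pow_ne_zero m hb
  have := pow_ne_zero m hx
  congr 1
  field_simp

theorem G_lagr (x b : ℝ) (hx : x ≠ 0) (hb : b ≠ 0) (hxb : x - b ≠ 0)
    (hG : ∀ z : ℤ, z ≠ 0 → G x b z ≠ 0) (n l a : ℕ) (hl : l ∈ range (n + 1)) (t : ℤ) :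
    ∏ m ∈ (range (n + 1)).erase l, G x b (t + (m + a : ℕ)) =
      ∑ k ∈ range (n + 1), (∏ m ∈ (range (n + 1)).erase l, G x b (k + (m + a : ℕ))) *
        ∏ m ∈ (range (n + 1)).erase k, (G x b (t - m) / G x b (k - m)) := by
  have hdif : ∀ k m : ℕ, k ≠ m → (x / b) ^ k - (x / b) ^ m ≠ 0 := by
    intro k m hkm h0
    have h := hG ((k : ℤ) - m) (by omega)
    rw [G_diff x b hx hb, zpow_natCast (x / b), h0] at h
    simp at h
  have hu : Set.InjOn (fun m : ℕ => (x / b) ^ m) (range (n + 1)) := by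
    intro k _ m _ h
    by_contra hkm
    exact hdif k m hkm (sub_eq_zero.2 h)
  have key := lagr n l hl (x / b) (fun m => x ^ ((m + a : ℕ) : ℤ)) (fun m => b ^ ((m + a : ℕ) : ℤ))
    ((x / b) ^ t) hu
  have e1 : ∀ t : ℤ, ∏ m ∈ (range (n + 1)).erase l, G x b (t + (m + a : ℕ)) =
      (b ^ t / (x - b)) ^ n * ∏ m ∈ (range (n + 1)).erase l,
        (x ^ ((m + a : ℕ) : ℤ) * (x / b) ^ t - b ^ ((m + a : ℕ) : ℤ)) := by
    intro t
    have : (b ^ t / (x - b)) ^ n = ∏ m ∈ (range (n + 1)).erase l, (b ^ t / (x - b)) := by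
      rw [prod_const, card_erase_of_mem hl]; simp
    rw [this, ← prod_mul_distrib]
    refine prod_congr rfl fun m _ => ?_
    rw [G_shift x b hx hb]; ring
  rw [e1, key, mul_sum]
  refine sum_congr rfl fun k hk => ?_
  have e2 : ∏ m ∈ (range (n + 1)).erase k, (G x b (t - m) / G x b (k - m)) =
      (b ^ t / b ^ (k : ℤ)) ^ n * ∏ m ∈ (range (n + 1)).erase k,
        (((x / b) ^ t - (x / b) ^ m) / ((x / b) ^ k - (x / b) ^ m)) := by
    have : (b ^ t / b ^ (k : ℤ)) ^ n =
        ∏ m ∈ (range (n + 1)).erase k, (b ^ t / b ^ (k : ℤ)) := by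
      rw [prod_const, card_erase_of_mem hk]; simp
    rw [this, ← prod_mul_distrib]
    refine prod_congr rfl fun m hm => ?_
    have hne := hdif k m (ne_of_mem_erase hm).symm
    rw [G_diff x b hx hb, G_diff x b hx hb, zpow_natCast (x / b)]
    have h1 := zpow_ne_zero (k : ℤ) hb
    have h2 := zpow_ne_zero (-(m : ℤ)) hx
    generalize (x / b) ^ k - (x / b) ^ m = w at *
    generalize (x / b) ^ t - (x / b) ^ m = w' at *
    generalize x ^ (-(m : ℤ)) = w2 at *
    field_simp
  rw [e1, e2]
  simp only [zpow_natCast (x / b)]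
  have h1 := zpow_ne_zero (k : ℤ) hb
  have h2 : (b ^ t / (x - b)) ^ n =
      (b ^ (k : ℤ) / (x - b)) ^ n * (b ^ t / b ^ (k : ℤ)) ^ n := by
    rw [← mul_pow]; congr 1; field_simp
  rw [h2]; ring

theorem prod_erase_split (k p : ℕ) (g : ℕ → ℝ) :
    ∏ m ∈ (range (k + p + 1)).erase k, g m =
      (∏ i ∈ range k, g i) * ∏ i ∈ range p, g (k + 1 + i) := by
  have : (range (k + p + 1)).erase k = range k ∪ Ico (k + 1) (k + p + 1) := by
    ext i; simp only [mem_erase, mem_range, mem_union, mem_Ico]; omega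
  rw [this, prod_union, prod_Ico_eq_prod_range]
  · congr 2
    congr 1; omega
  · rw [disjoint_left]; intro i; simp only [mem_range, mem_Ico]; omega

noncomputable def sg (p : ℕ) : ℝ := ∏ i ∈ range p, (-1 : ℝ) ^ i

theorem sg_succ (p : ℕ) : sg (p + 1) = sg p * (-1) ^ p := prod_range_succ _ _

theorem sg_add (a b : ℕ) : sg (a + b) = sg a * sg b * (-1) ^ (a * b) := by
  induction b with
  | zero => simp [sg]
  | succ b ih => rw [← add_assoc, sg_succ, ih, sg_succ, pow_add, mul_add, pow_add]; ring

theorem sg_sq (p : ℕ) : sg p * sg p = 1 := by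
  unfold sg
  rw [← prod_mul_distrib]
  refine prod_eq_one fun i _ => ?_
  rw [← mul_pow]; simp

theorem sg_eq (p : ℕ) : sg p = (-1 : ℝ) ^ ((p : ℤ) * ((p : ℤ) - 1) / 2) := by
  induction p with
  | zero => simp [sg]
  | succ p ih =>
    have : (((p + 1 : ℕ) : ℤ) * (((p + 1 : ℕ) : ℤ) - 1) / 2) =
        ((p : ℤ) * ((p : ℤ) - 1) / 2) + p := by
      rw [← Int.add_mul_ediv_right _ _ (by norm_num : (2 : ℤ) ≠ 0)]
      congr 1; push_cast; ring
    rw [sg_succ, ih, this, zpow_add₀ (by norm_num), zpow_natCast]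

noncomputable def ff (θ : ℝ) (m : ℕ) : ℝ := ∏ i ∈ range m, genFib θ (i + 1)

theorem ff_succ (θ : ℝ) (m : ℕ) : ff θ (m + 1) = ff θ m * genFib θ (m + 1) :=
  prod_range_succ _ _

theorem genFib_pos (θ : ℝ) (hθ : 0 < θ) (m : ℕ) : 0 < genFib θ (m + 1) := by
  unfold genFib
  refine div_pos ?_ (by positivity)
  have h1 : Real.exp (-(((m + 1 : ℕ) : ℝ) * θ)) < Real.exp (((m + 1 : ℕ) : ℝ) * θ) := by
    apply Real.exp_lt_exp.2
    have : 0 < ((m + 1 : ℕ) : ℝ) * θ := by positivity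
    linarith
  have h2 := Real.exp_pos (-(((m + 1 : ℕ) : ℝ) * θ))
  rcases neg_one_pow_eq_or ℝ (m + 1) with h | h <;> rw [h] <;> linarith

theorem ff_pos (θ : ℝ) (hθ : 0 < θ) (m : ℕ) : 0 < ff θ m :=
  prod_pos fun i _ => genFib_pos θ hθ i

theorem ff_add (θ : ℝ) (r k : ℕ) :
    ff θ (r + k) = ff θ r * ∏ i ∈ range k, genFib θ (r + i + 1) :=
  prod_range_add _ _ _

theorem fibinom_eq (θ : ℝ) (hθ : 0 < θ) (r k : ℕ) :
    fibinom θ (r + k) k = ff θ (r + k) / (ff θ k * ff θ r) := by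
  have h1 := (ff_pos θ hθ k).ne'
  have h2 := (ff_pos θ hθ r).ne'
  unfold fibinom
  rw [prod_div_distrib, ff_add]
  change _ / ff θ k = _
  have : ∏ j ∈ range k, genFib θ (r + k - j) = ∏ i ∈ range k, genFib θ (r + i + 1) := by
    rw [← prod_range_reflect]
    refine prod_congr rfl fun i hi => ?_
    rw [mem_range] at hi
    congr 1; omega
  rw [this]; field_simp

theorem genFib_eq (θ : ℝ) (m : ℕ) :
    genFib θ m = G (Real.exp θ) (-Real.exp (-θ)) m := by
  unfold genFib G
  rw [zpow_natCast, zpow_natCast, neg_pow (Real.exp (-θ)), ← Real.exp_nat_mul, ← Real.exp_nat_mul]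
  congr 1
  · rw [mul_neg]
  · ring

theorem G_neg (θ : ℝ) (m : ℕ) :
    G (Real.exp θ) (-Real.exp (-θ)) (-(m : ℤ)) = (-1) ^ (m + 1) * genFib θ m := by
  rw [genFib_eq]
  unfold G
  rw [zpow_neg, zpow_neg, zpow_natCast, zpow_natCast, ← inv_pow, ← inv_pow, inv_neg,
    ← Real.exp_neg, ← Real.exp_neg, neg_neg, neg_pow (Real.exp θ), neg_pow (Real.exp (-θ)), pow_succ]
  have : ((-1 : ℝ) ^ m) * (-1) ^ m = 1 := by rw [← mul_pow]; simp
  rw [← mul_div_assoc]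
  congr 1
  linear_combination (- Real.exp (-θ) ^ m) * this

theorem prod1 (θ : ℝ) (k p : ℕ) :
    ∏ m ∈ (range (k + p + 1)).erase k, G (Real.exp θ) (-Real.exp (-θ)) ((k : ℤ) - m) =
      ff θ k * (sg p * ff θ p) := by
  rw [prod_erase_split k p (fun m => G (Real.exp θ) (-Real.exp (-θ)) ((k : ℤ) - m))]
  congr 1
  · rw [← prod_range_reflect]
    refine prod_congr rfl fun i hi => ?_
    rw [mem_range] at hi
    rw [genFib_eq]; congr 1; omega
  · unfold sg ff
    rw [← prod_mul_distrib]
    refine prod_congr rfl fun i hi => ?_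
    have : (k : ℤ) - ((k + 1 + i : ℕ) : ℤ) = -((i + 1 : ℕ) : ℤ) := by push_cast; ring
    rw [this, G_neg, pow_succ, pow_succ]; ring

theorem prod2 (θ : ℝ) (k p : ℕ) :
    ∏ m ∈ (range (k + p + 1)).erase k, G (Real.exp θ) (-Real.exp (-θ)) ((m : ℤ) - k) =
      sg k * ff θ k * ff θ p := by
  rw [prod_erase_split k p (fun m => G (Real.exp θ) (-Real.exp (-θ)) ((m : ℤ) - k))]
  congr 1
  · rw [← prod_range_reflect]
    unfold sg ff
    rw [← prod_mul_distrib]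
    refine prod_congr rfl fun i hi => ?_
    rw [mem_range] at hi
    have : ((k - 1 - i : ℕ) : ℤ) - k = -((i + 1 : ℕ) : ℤ) := by omega
    rw [this, G_neg, pow_succ, pow_succ]; ring
  · refine prod_congr rfl fun i hi => ?_
    rw [genFib_eq]; congr 1; push_cast; ring

theorem prod3 (θ : ℝ) (n k s : ℕ) (hk : k ∈ range (n + 1)) :
    (∏ m ∈ (range (n + 1)).erase k, G (Real.exp θ) (-Real.exp (-θ)) (-((s + 1 : ℕ) : ℤ) - m)) *
      ((-1) ^ (s + k) * genFib θ (s + k + 1)) =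
      (-1) ^ (s * (n + 1)) * sg (n + 1) * ∏ m ∈ range (n + 1), genFib θ (s + m + 1) := by
  have hh : ∀ m : ℕ, G (Real.exp θ) (-Real.exp (-θ)) (-((s + 1 : ℕ) : ℤ) - m) =
      (-1) ^ (s + m) * genFib θ (s + m + 1) := by
    intro m
    have : -((s + 1 : ℕ) : ℤ) - m = -((s + m + 1 : ℕ) : ℤ) := by push_cast; ring
    rw [this, G_neg, pow_succ, pow_succ]; ring
  simp only [hh]
  rw [prod_erase_mul _ _ hk, prod_mul_distrib]
  congr 1
  simp only [pow_add (-1 : ℝ) s]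
  rw [prod_mul_distrib, prod_const, card_range, ← pow_mul]
  rfl

theorem sign_id (k p s j : ℕ) :
    (-1 : ℝ) ^ ((s + j) * (k + p + 1)) * sg (k + p + 1) * (-1) ^ (s + j + k) * sg p * sg j =
    (-1 : ℝ) ^ ((k + p) * (k + j + (s + 1))) * sg k * sg j := by
  have h1 := sg_add k p
  have h2 := sg_sq p
  rw [sg_succ, h1]
  have e : (-1 : ℝ) ^ ((s + j) * (k + p + 1)) * (-1) ^ (k * p) * (-1) ^ (k + p) *
      (-1) ^ (s + j + k) = (-1 : ℝ) ^ ((k + p) * (k + j + (s + 1))) := by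
    rw [← pow_add, ← pow_add, ← pow_add]
    apply neg_one_pow_congr
    simp only [Nat.even_add, Nat.even_mul, Nat.not_even_one]
    tauto
  rw [← e]
  linear_combination ((-1 : ℝ) ^ ((s + j) * (k + p + 1)) * (-1) ^ (k * p) * (-1) ^ (k + p) *
      (-1) ^ (s + j + k) * sg k * sg j) * h2

noncomputable def E (θ : ℝ) (n c k j : ℕ) : ℝ :=
  (∏ m ∈ range (n + 1), genFib θ (k + c + m + 1)) *
    (∏ m ∈ (range (n + 1)).erase k,
      G (Real.exp θ) (-Real.exp (-θ)) (-((c + j + 1 : ℕ) : ℤ) - m)) /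
    ((∏ m ∈ (range (n + 1)).erase k, G (Real.exp θ) (-Real.exp (-θ)) ((k : ℤ) - m)) *
      ∏ m ∈ (range (n + 1)).erase j, G (Real.exp θ) (-Real.exp (-θ)) ((m : ℤ) - j))

theorem G_ne (θ : ℝ) (hθ : 0 < θ) (z : ℤ) (hz : z ≠ 0) :
    G (Real.exp θ) (-Real.exp (-θ)) z ≠ 0 := by
  obtain ⟨m, rfl | rfl⟩ := Int.eq_nat_or_neg z
  · obtain ⟨i, rfl⟩ : ∃ i, m = i + 1 := ⟨m - 1, by omega⟩
    rw [← genFib_eq]; exact (genFib_pos θ hθ i).ne'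
  · obtain ⟨i, rfl⟩ : ∃ i, m = i + 1 := ⟨m - 1, by omega⟩
    rw [G_neg]
    exact mul_ne_zero (pow_ne_zero _ (by norm_num)) (genFib_pos θ hθ i).ne'

theorem sum_E (θ : ℝ) (hθ : 0 < θ) (n c l j : ℕ) (hl : l ∈ range (n + 1))
    (hj : j ∈ range (n + 1)) :
    ∑ k ∈ range (n + 1), 1 / genFib θ (l + k + (c + 1)) * E θ n c k j =
      if l = j then 1 else 0 := by
  have hx := (Real.exp_pos θ).ne'
  have hb : -Real.exp (-θ) ≠ 0 := neg_ne_zero.2 (Real.exp_pos _).ne'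
  have hxb : Real.exp θ - -Real.exp (-θ) ≠ 0 := by
    have := Real.exp_pos θ
    have := Real.exp_pos (-θ)
    linarith
  have key := G_lagr _ _ hx hb hxb (G_ne θ hθ) n l (c + 1) hl (-((c + j + 1 : ℕ) : ℤ))
  have hP : ∏ m ∈ (range (n + 1)).erase j, G (Real.exp θ) (-Real.exp (-θ)) ((m : ℤ) - j) ≠ 0 := by
    refine prod_ne_zero_iff.2 fun m hm => G_ne θ hθ _ ?_
    have := ne_of_mem_erase hm
    omega
  have hL : ∏ m ∈ (range (n + 1)).erase l,
      G (Real.exp θ) (-Real.exp (-θ)) (-((c + j + 1 : ℕ) : ℤ) + (m + (c + 1) : ℕ)) =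
      (if l = j then 1 else 0) *
        ∏ m ∈ (range (n + 1)).erase j, G (Real.exp θ) (-Real.exp (-θ)) ((m : ℤ) - j) := by
    have e : ∀ m : ℕ, -((c + j + 1 : ℕ) : ℤ) + (m + (c + 1) : ℕ) = (m : ℤ) - j := by
      intro m; push_cast; ring
    simp only [e]
    split_ifs with h
    · rw [h, one_mul]
    · rw [zero_mul]
      refine prod_eq_zero (mem_erase.2 ⟨fun h' => h h'.symm, hj⟩) ?_
      simp [G]
  rw [hL] at key
  rw [eq_comm, ← mul_left_inj' hP, key, sum_mul]
  refine sum_congr rfl fun k hk => ?_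
  unfold E
  have h0 : genFib θ (l + k + (c + 1)) ≠ 0 := (genFib_pos θ hθ (l + k + c)).ne'
  have h1 : ∏ m ∈ range (n + 1), genFib θ (k + c + m + 1) =
      (∏ m ∈ (range (n + 1)).erase l, G (Real.exp θ) (-Real.exp (-θ)) (k + (m + (c + 1) : ℕ))) *
        genFib θ (l + k + (c + 1)) := by
    rw [← prod_erase_mul _ _ hl]
    congr 1
    · refine prod_congr rfl fun m _ => ?_
      rw [genFib_eq]; congr 1; push_cast; ring
    · congr 1; ring
  have hQ : ∏ m ∈ (range (n + 1)).erase k, G (Real.exp θ) (-Real.exp (-θ)) ((k : ℤ) - m) ≠ 0 := by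
    refine prod_ne_zero_iff.2 fun m hm => G_ne θ hθ _ ?_
    have := ne_of_mem_erase hm
    omega
  rw [h1, prod_div_distrib]
  field_simp

theorem E_eq (θ : ℝ) (hθ : 0 < θ) (k p j r c : ℕ) (n : ℕ) (hn : k + p = n) (hn' : j + r = n) :
    E θ n c k j = (-1 : ℝ) ^ (n * (k + j + (c + 1))) * sg k * sg j *
        genFib θ (k + j + c + 1) *
        (fibinom θ (n + k + (c + 1)) r * fibinom θ (n + j + (c + 1)) p *
          fibinom θ (k + j + c) k * fibinom θ (k + j + c) j) := by
  have hk : k ∈ range (n + 1) := by rw [mem_range]; omega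
  have i1 : n + k + (c + 1) = (k + j + c + 1) + r := by omega
  have i2 : n + j + (c + 1) = (k + j + c + 1) + p := by omega
  have f1 := fibinom_eq θ hθ (k + j + c + 1) r
  have f2 := fibinom_eq θ hθ (k + j + c + 1) p
  have f3 : fibinom θ (k + j + c) k = ff θ (k + j + c) / (ff θ k * ff θ (j + c)) := by
    have := fibinom_eq θ hθ (j + c) k
    rwa [show j + c + k = k + j + c by ring] at this
  have f4 : fibinom θ (k + j + c) j = ff θ (k + j + c) / (ff θ j * ff θ (k + c)) := by
    have := fibinom_eq θ hθ (k + c) j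
    rwa [show k + c + j = k + j + c by ring] at this
  have p1 := prod1 θ k p
  have p2 := prod2 θ j r
  have p3 := prod3 θ n k (c + j) hk
  have q1 := ff_add θ (k + c) (n + 1)
  have q2 := ff_add θ (c + j) (n + 1)
  have sid := sign_id k p c j
  rw [hn] at p1 sid
  rw [hn'] at p2
  rw [i1, i2, f1, f2, f3, f4, ff_succ, ← i1, ← i2, ← sid]
  rw [show k + c + (n + 1) = n + k + (c + 1) by ring] at q1
  rw [show c + j + (n + 1) = n + j + (c + 1) by ring] at q2
  rw [show c + j + k = k + j + c by ring] at p3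
  rw [show j + c = c + j by ring]
  unfold E
  rw [p1, p2, q1, q2, show c + j + k = k + j + c by ring]
  have g0 := (genFib_pos θ hθ (k + j + c)).ne'
  have a1 := (ff_pos θ hθ k).ne'
  have a2 := (ff_pos θ hθ p).ne'
  have a3 := (ff_pos θ hθ j).ne'
  have a4 := (ff_pos θ hθ r).ne'
  have a5 := (ff_pos θ hθ (k + c)).ne'
  have a6 := (ff_pos θ hθ (c + j)).ne'
  have a7 := (ff_pos θ hθ (k + j + c)).ne'
  have s1 : (sg p) ^ 2 = 1 := by rw [sq, sg_sq]
  have s2 : (sg j) ^ 2 = 1 := by rw [sq, sg_sq]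
  have s1' : sg p ≠ 0 := by intro h; rw [h] at s1; norm_num at s1
  have s2' : sg j ≠ 0 := by intro h; rw [h] at s2; norm_num at s2
  have s3 : ((-1 : ℝ) ^ (k + j + c)) ^ 2 = 1 := by rw [← pow_mul, mul_comm, pow_mul]; simp
  generalize (-1 : ℝ) ^ (k + j + c) = e at *
  generalize (-1 : ℝ) ^ ((c + j) * (n + 1)) = e' at *
  generalize (∏ m ∈ (range (n + 1)).erase k,
      G (Real.exp θ) (-Real.exp (-θ)) (-((c + j + 1 : ℕ) : ℤ) - m)) = W at *
  generalize ∏ m ∈ range (n + 1), genFib θ (c + j + m + 1) = V at *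
  generalize ∏ m ∈ range (n + 1), genFib θ (k + c + m + 1) = U at *
  have hW : W * genFib θ (k + j + c + 1) = e' * sg (n + 1) * V * e := by
    linear_combination e * p3 - (W * genFib θ (k + j + c + 1)) * s3
  field_simp
  rw [s1, s2]
  linear_combination U * hW

theorem B_eq (θ : ℝ) (hθ : 0 < θ) (n c k j : ℕ) (hk : k ≤ n) (hj : j ≤ n) :
    (-1 : ℝ) ^ ((n * ((k : ℕ) + (j : ℕ) + (c + 1 : ℕ)) : ℤ) - (k : ℕ) * ((k : ℕ) - 1) / 2 -
          (j : ℕ) * ((j : ℕ) - 1) / 2) *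
        genFib θ ((k : ℕ) + (j : ℕ) + (c + 1)) *
        (fibinom θ (n + (k : ℕ) + (c + 1)) (n - (j : ℕ)) *
          fibinom θ (n + (j : ℕ) + (c + 1)) (n - (k : ℕ)) *
          fibinom θ ((k : ℕ) + (j : ℕ) + (c + 1) - 1) (k : ℕ) *
          fibinom θ ((k : ℕ) + (j : ℕ) + (c + 1) - 1) (j : ℕ)) = E θ n c k j := by
  rw [E_eq θ hθ k (n - k) j (n - j) c n (by omega) (by omega)]
  have hs : ∀ p : ℕ, (-1 : ℝ) ^ (-((p : ℤ) * ((p : ℤ) - 1) / 2)) = sg p := by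
    intro p
    rw [zpow_neg, ← sg_eq]
    exact inv_eq_of_mul_eq_one_left (sg_sq p)
  rw [sub_eq_add_neg, sub_eq_add_neg, zpow_add₀ (by norm_num), zpow_add₀ (by norm_num), hs, hs]
  have : (n * ((k : ℕ) + (j : ℕ) + (c + 1 : ℕ)) : ℤ) = ((n * (k + j + (c + 1)) : ℕ) : ℤ) := by
    push_cast; ring
  rw [this, zpow_natCast]
  rfl

end Filb

theorem inverse_generalized_Filbert (θ : ℝ) (hθ : 0 < θ) (n α : ℕ) (hα : 1 ≤ α)
    (A B : Matrix (Fin (n + 1)) (Fin (n + 1)) ℝ)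
    (hA : ∀ l j : Fin (n + 1), A l j = 1 / genFib θ ((l : ℕ) + (j : ℕ) + α))
    (hB : ∀ l j : Fin (n + 1), B l j =
      (-1 : ℝ) ^ ((n * ((l : ℕ) + (j : ℕ) + α) : ℤ) - (l : ℕ) * ((l : ℕ) - 1) / 2 -
          (j : ℕ) * ((j : ℕ) - 1) / 2) *
        genFib θ ((l : ℕ) + (j : ℕ) + α) *
        (fibinom θ (n + (l : ℕ) + α) (n - (j : ℕ)) * fibinom θ (n + (j : ℕ) + α) (n - (l : ℕ)) *
          fibinom θ ((l : ℕ) + (j : ℕ) + α - 1) (l : ℕ) *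
          fibinom θ ((l : ℕ) + (j : ℕ) + α - 1) (j : ℕ))) :
    A * B = 1 ∧ B * A = 1 := by
  obtain ⟨c, rfl⟩ : ∃ c, α = c + 1 := ⟨α - 1, by omega⟩
  have h : A * B = 1 := by
    ext l j
    rw [Matrix.mul_apply, Matrix.one_apply]
    have h1 := Filb.sum_E θ hθ n c l j (Finset.mem_range.2 l.2) (Finset.mem_range.2 j.2)
    rw [Finset.sum_range] at h1
    simp only [Fin.ext_iff]
    rw [← h1]
    refine Finset.sum_congr rfl fun k _ => ?_
    rw [hA, hB, Filb.B_eq θ hθ n c k j (Nat.le_of_lt_succ k.2) (Nat.le_of_lt_succ j.2)]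
  exact ⟨h, mul_eq_one_comm.1 h⟩
end

section
/- det (1/F_{l+j+α}(θ))_{0≤l,j≤n} = (−1)^{α C(n+1,2)} (F_α(θ) ∏_{k=1}^n F_{2k+α}(θ) (2k+α−1 choose k)_{F(θ)}^2)^{−1}, where C(n+1,2) = n(n+1)/2. -/
lemma genFib_pos (θ : ℝ) (hθ : 0 < θ) (m : ℕ) (hm : 1 ≤ m) : 0 < genFib θ m := by
  unfold genFib
  apply div_pos _ (by positivity)
  have h1 : Real.exp (-(m * θ)) < Real.exp (m * θ) := by
    apply Real.exp_lt_exp.mpr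
    have : 0 < (m : ℝ) * θ := mul_pos (by exact_mod_cast hm) hθ
    linarith
  have h2 := Real.exp_pos (-(m * θ))
  rcases neg_one_pow_eq_or ℝ m with h | h <;> rw [h] <;> linarith [Real.exp_pos (m * θ)]

lemma genFib_vajda (θ : ℝ) (m a b : ℕ) :
    genFib θ (m + a) * genFib θ (m + b) - genFib θ m * genFib θ (m + a + b)
      = (-1 : ℝ) ^ m * genFib θ a * genFib θ b := by
  have key : ∀ k : ℕ, genFib θ k = (Real.exp θ ^ k - (-1 : ℝ) ^ k * (Real.exp θ ^ k)⁻¹) /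
      (Real.exp θ + Real.exp (-θ)) := by
    intro k
    unfold genFib
    rw [Real.exp_neg, Real.exp_nat_mul]
  have hD : Real.exp θ + Real.exp (-θ) ≠ 0 := by positivity
  simp only [key]
  have hx : Real.exp θ ≠ 0 := (Real.exp_pos θ).ne'
  generalize Real.exp θ + Real.exp (-θ) = D at *
  generalize Real.exp θ = x at *
  simp only [pow_add]
  have hM := pow_ne_zero m hx
  have hA := pow_ne_zero a hx
  have hB := pow_ne_zero b hx
  generalize x ^ m = M at *
  generalize x ^ a = A at *
  generalize x ^ b = B at *
  have hs : ((-1 : ℝ) ^ m) ^ 2 = 1 := by rw [← pow_mul, mul_comm, pow_mul]; simp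
  generalize (-1 : ℝ) ^ m = s at *
  generalize (-1 : ℝ) ^ a = t at *
  generalize (-1 : ℝ) ^ b = u at *
  field_simp
  ring

lemma det_pivot_last {n : ℕ} (M : Matrix (Fin (n + 1)) (Fin (n + 1)) ℝ)
    (hp : M (Fin.last n) (Fin.last n) ≠ 0) :
    M.det = M (Fin.last n) (Fin.last n) * (Matrix.of fun i j : Fin n =>
      M i.castSucc j.castSucc -
        M i.castSucc (Fin.last n) / M (Fin.last n) (Fin.last n) * M (Fin.last n) j.castSucc).det := by
  set p := M (Fin.last n) (Fin.last n) with hpdef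
  let c : Fin (n + 1) → ℝ := fun i => if i = Fin.last n then 0 else M i (Fin.last n) / p
  let N : Matrix (Fin (n + 1)) (Fin (n + 1)) ℝ :=
    Matrix.of fun i j => M i j - c i * M (Fin.last n) j
  have h1 : M.det = N.det := by
    apply Matrix.det_eq_of_forall_row_eq_smul_add_const c (Fin.last n) (by simp [c])
    intro i j
    simp [N, c]
  rw [h1, Matrix.det_succ_column N (Fin.last n), Fin.sum_univ_castSucc]
  rw [Finset.sum_eq_zero]
  · have hs : (-1 : ℝ) ^ (n + n) = 1 := by rw [← two_mul, pow_mul]; simp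
    simp only [Fin.val_last, hs, zero_add, one_mul]
    congr 1
    · simp [N, c, hpdef]
    · congr 1
      ext i j
      simp [N, c, Fin.succAbove_last, Fin.castSucc_ne_last]
  · intro i _
    have : N i.castSucc (Fin.last n) = 0 := by
      simp [N, c, Fin.castSucc_ne_last, ← hpdef, hp]
    simp [this]

lemma fibinom_prod (θ : ℝ) (n α : ℕ) (hα : 1 ≤ α) :
    (∏ i : Fin n, (-1 : ℝ) ^ (i : ℕ) * genFib θ (n - i) / genFib θ (i + n + α)) ^ 2
      = (fibinom θ (2 * n + α - 1) n ^ 2)⁻¹ := by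
  rw [← inv_pow, Fin.prod_univ_eq_prod_range
    (fun i => (-1 : ℝ) ^ i * genFib θ (n - i) / genFib θ (i + n + α))]
  unfold fibinom
  simp only [mul_div_assoc]
  rw [Finset.prod_mul_distrib, mul_pow, ← Finset.prod_pow]
  rw [Finset.prod_eq_one (fun i _ => by rw [← pow_mul, mul_comm, pow_mul]; simp), one_mul]
  congr 1
  rw [← Finset.prod_inv_distrib, ← Finset.prod_range_reflect]
  simp only [inv_div, Finset.prod_div_distrib]
  congr 1
  · apply Finset.prod_congr rfl
    intro i hi
    have := Finset.mem_range.mp hi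
    congr 1
    omega
  · apply Finset.prod_congr rfl
    intro i hi
    have := Finset.mem_range.mp hi
    congr 1
    omega

lemma filbert_step (θ : ℝ) (hθ : 0 < θ) (n α : ℕ) (hα : 1 ≤ α) :
    (Matrix.of fun l j : Fin (n + 1) => 1 / genFib θ ((l : ℕ) + (j : ℕ) + α)).det
      = (-1 : ℝ) ^ (α * n) *
        (genFib θ (2 * n + α) * fibinom θ (2 * n + α - 1) n ^ 2)⁻¹ *
        (Matrix.of fun l j : Fin n => 1 / genFib θ ((l : ℕ) + (j : ℕ) + α)).det := by
  have hF : ∀ k, genFib θ (k + α) ≠ 0 := fun k => (genFib_pos θ hθ _ (by omega)).ne'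
  rw [det_pivot_last _ (by simpa using hF (n + n))]
  let r : Fin n → ℝ := fun i => (-1 : ℝ) ^ (i : ℕ) * genFib θ (n - i) / genFib θ (i + n + α)
  let B : Matrix (Fin n) (Fin n) ℝ :=
    Matrix.of fun l j : Fin n => 1 / genFib θ ((l : ℕ) + (j : ℕ) + α)
  have hM : (Matrix.of fun i j : Fin n =>
      (Matrix.of fun l j : Fin (n + 1) => 1 / genFib θ ((l : ℕ) + (j : ℕ) + α))
        i.castSucc j.castSucc -
      (Matrix.of fun l j : Fin (n + 1) => 1 / genFib θ ((l : ℕ) + (j : ℕ) + α))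
        i.castSucc (Fin.last n) /
      (Matrix.of fun l j : Fin (n + 1) => 1 / genFib θ ((l : ℕ) + (j : ℕ) + α))
        (Fin.last n) (Fin.last n) *
      (Matrix.of fun l j : Fin (n + 1) => 1 / genFib θ ((l : ℕ) + (j : ℕ) + α))
        (Fin.last n) j.castSucc) =
      (-1 : ℝ) ^ α • (Matrix.diagonal r * B * Matrix.diagonal r) := by
    ext i j
    have hv := genFib_vajda θ (i + j + α) (n - j) (n - i)
    have e1 : (i + j + α + (n - j) : ℕ) = i + n + α := by omega
    have e2 : (i + j + α + (n - i) : ℕ) = n + j + α := by omega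
    have e3 : (i + n + α + (n - i) : ℕ) = n + n + α := by omega
    rw [e1, e2, e3] at hv
    have e4 : (j + n + α : ℕ) = n + j + α := by omega
    simp only [Matrix.of_apply, Matrix.smul_apply, Matrix.mul_diagonal, Matrix.diagonal_mul,
      Fin.val_castSucc, Fin.val_last, B, r, smul_eq_mul, e4]
    have h1 := hF (i + j)
    have h2 := hF (i + n)
    have h3 := hF (n + j)
    have h4 := hF (n + n)
    rw [pow_add, pow_add] at hv
    field_simp
    linear_combination hv
  rw [hM, Matrix.det_smul, Matrix.det_mul, Matrix.det_mul, Matrix.det_diagonal]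
  have hr := fibinom_prod θ n α hα
  change (∏ i, r i) ^ 2 = _ at hr
  change _ = _ * B.det
  rw [mul_inv, ← hr]
  simp only [Matrix.of_apply, Fin.val_last, Fintype.card_fin, ← two_mul, ← pow_mul, one_div]
  ring

theorem det_generalized_Filbert (θ : ℝ) (hθ : 0 < θ) (n α : ℕ) (hα : 1 ≤ α)
    (A : Matrix (Fin (n + 1)) (Fin (n + 1)) ℝ)
    (hA : ∀ l j : Fin (n + 1), A l j = 1 / genFib θ ((l : ℕ) + (j : ℕ) + α)) :
    A.det = (-1 : ℝ) ^ (α * (n * (n + 1) / 2)) *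
      (genFib θ α *
        ∏ k ∈ Finset.Icc 1 n, genFib θ (2 * k + α) * fibinom θ (2 * k + α - 1) k ^ 2)⁻¹ := by
  have hA' : A = Matrix.of fun l j : Fin (n + 1) => 1 / genFib θ ((l : ℕ) + (j : ℕ) + α) := by
    ext l j
    exact hA l j
  rw [hA']
  clear hA' hA A
  induction n with
  | zero => simp
  | succ n ih =>
    rw [filbert_step θ hθ (n + 1) α hα, ih, Finset.prod_Icc_succ_top (by omega)]
    have e : (n + 1) * (n + 1 + 1) / 2 = (n + 1) + n * (n + 1) / 2 := by
      have : (n + 1) * (n + 1 + 1) = n * (n + 1) + (n + 1) * 2 := by ring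
      rw [this, Nat.add_mul_div_right _ _ (by norm_num)]
      ring
    rw [e, mul_add, pow_add]
    simp only [mul_inv]
    ring
end

section
/- The inverse of the Filbert matrix (1/F_{l+j+1})_{0≤l,j≤n}, where F_m are the Fibonacci numbers, has integer entries; explicitly, its (l,j)-entry is (−1)^{n(l+j+1) − l(l−1)/2 − j(j−1)/2} F_{l+j+1} (n+l+1 choose n−j)_F (n+j+1 choose n−l)_F (l+j choose l)_F (l+j choose j)_F, where (m choose k)_F = ∏_{i=1}^k F_{m−i+1}/F_i is the Fibonomial coefficient. -/
/-- Fibonomial coefficient as a rational number. -/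
noncomputable def fibnom (m k : ℕ) : ℚ :=
  ∏ i ∈ Finset.range k, (Nat.fib (m - i) : ℚ) / (Nat.fib (i + 1) : ℚ)

open Finset in
lemma fil_lagrange (a b : ℕ → ℝ) (ha : ∀ k, a k ≠ 0) (s : Finset ℕ)
    (hinj : ∀ k ∈ s, ∀ i ∈ s, i ≠ k → a k * b i - a i * b k ≠ 0) (x y : ℝ) (hx : x ≠ 0)
    (T : Finset ℕ) (c d : ℕ → ℝ) (hT : T.card + 1 = s.card) :
    ∏ i ∈ T, (c i * x + d i * y) = ∑ k ∈ s, (∏ i ∈ T, (c i * a k + d i * b k)) *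
      ∏ i ∈ s.erase k, ((x * b i - y * a i) / (a k * b i - a i * b k)) := by
  classical
  set p : Polynomial ℝ := ∏ i ∈ T, (Polynomial.C (d i) * Polynomial.X + Polynomial.C (c i)) with hp
  set v : ℕ → ℝ := fun k => b k / a k with hv
  have hvs : Set.InjOn v s := by
    intro k hk i hi h
    by_contra hne
    apply hinj k hk i hi (Ne.symm hne)
    have h1 := ha k
    have h2 := ha i
    simp only [hv] at h
    field_simp at h
    linarith
  have hdeg : p.degree < s.card := by
    have h1 : p.degree ≤ ∑ i ∈ T, (1 : WithBot ℕ) := by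
      rw [hp]
      refine (Polynomial.degree_prod_le _ _).trans (Finset.sum_le_sum ?_)
      intro i _
      exact Polynomial.degree_linear_le
    refine h1.trans_lt ?_
    rw [← hT]
    simp only [sum_const, nsmul_eq_mul, mul_one]
    exact_mod_cast Nat.lt_succ_self _
  have key := Lagrange.eq_interpolate (v := v) hvs hdeg
  have key2 := congrArg (Polynomial.eval (y / x)) key
  rw [Lagrange.interpolate_apply, Polynomial.eval_finsetSum] at key2
  have hpe : ∀ u w : ℝ, u ≠ 0 → ∏ i ∈ T, (c i * u + d i * w) = u ^ T.card * p.eval (w / u) := by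
    intro u w hu
    rw [hp, Polynomial.eval_prod, ← Finset.prod_const, ← Finset.prod_mul_distrib]
    refine Finset.prod_congr rfl fun i _ => ?_
    simp
    field_simp
    ring
  rw [hpe x y hx, key2, Finset.mul_sum]
  refine Finset.sum_congr rfl fun k hk => ?_
  rw [hpe _ _ (ha k), Polynomial.eval_mul, Polynomial.eval_C, Lagrange.basis]
  have hc : T.card = (s.erase k).card := by rw [Finset.card_erase_of_mem hk]; omega
  have e : x ^ T.card * ∏ j ∈ s.erase k, Polynomial.eval (y / x) (Lagrange.basisDivisor (v k) (v j))
      = a k ^ T.card * ∏ i ∈ s.erase k, ((x * b i - y * a i) / (a k * b i - a i * b k)) := by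
    rw [hc, ← Finset.prod_const, ← Finset.prod_const, ← Finset.prod_mul_distrib,
      ← Finset.prod_mul_distrib]
    refine Finset.prod_congr rfl fun i hi => ?_
    have h1 := ha k
    have h2 := ha i
    have h3 := hinj k hk i (Finset.mem_of_mem_erase hi) (Finset.ne_of_mem_erase hi)
    have h4 : v k - v i ≠ 0 := by
      intro h
      apply h3
      simp only [hv] at h
      field_simp at h
      linarith
    have h5 : v k - v i = - (a k * b i - a i * b k) / (a k * a i) := by
      simp only [hv]; field_simp; ring
    simp only [Lagrange.basisDivisor, Polynomial.eval_mul, Polynomial.eval_C, Polynomial.eval_sub,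
      Polynomial.eval_X]
    rw [h5]
    simp only [hv]
    field_simp
    ring
  clear_value p
  rw [mul_left_comm, Polynomial.eval_prod (s.erase k), e]
  ring

noncomputable def filG (k i : ℕ) : ℝ :=
  (Real.goldenRatio ^ k * Real.goldenConj ^ i - Real.goldenRatio ^ i * Real.goldenConj ^ k) / √5

lemma filG_add (m i : ℕ) : filG (i + m) i = (-1) ^ i * (Nat.fib m : ℝ) := by
  rw [filG, Real.coe_fib_eq, ← Real.goldenRatio_mul_goldenConj, mul_pow]
  ring

lemma filG_symm (k i : ℕ) : filG k i = - filG i k := by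
  unfold filG; ring

lemma filG_add' (m k : ℕ) : filG k (k + m) = (-1) ^ (k + 1) * (Nat.fib m : ℝ) := by
  rw [filG_symm, filG_add]; ring

lemma filG_ne (k i : ℕ) (h : i ≠ k) : filG k i ≠ 0 := by
  rcases Nat.lt_or_gt_of_ne h with h | h
  · obtain ⟨m, rfl⟩ := Nat.exists_eq_add_of_lt h
    rw [add_assoc, filG_add]
    have : (Nat.fib (m + 1) : ℝ) ≠ 0 := by exact_mod_cast (Nat.fib_pos.2 (Nat.succ_pos m)).ne'
    simp [this]
  · obtain ⟨m, rfl⟩ := Nat.exists_eq_add_of_lt h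
    rw [add_assoc, filG_add']
    have : (Nat.fib (m + 1) : ℝ) ≠ 0 := by exact_mod_cast (Nat.fib_pos.2 (Nat.succ_pos m)).ne'
    simp [this]

/-- Fibonacci factorial. -/
def filFact (m : ℕ) : ℕ := ∏ i ∈ Finset.range m, Nat.fib (i + 1)

lemma filFact_succ (m : ℕ) : filFact (m + 1) = filFact m * Nat.fib (m + 1) :=
  Finset.prod_range_succ _ _

lemma filFact_pos (m : ℕ) : 0 < filFact m :=
  Finset.prod_pos fun i _ => Nat.fib_pos.2 (Nat.succ_pos i)

lemma fil_fib_ne (m : ℕ) : (Nat.fib (m + 1) : ℚ) ≠ 0 := by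
  exact_mod_cast (Nat.fib_pos.2 (Nat.succ_pos m)).ne'

lemma fil_fib_neR (m : ℕ) : (Nat.fib (m + 1) : ℝ) ≠ 0 := by
  exact_mod_cast (Nat.fib_pos.2 (Nat.succ_pos m)).ne'

lemma fibnom_fact (b k : ℕ) :
    fibnom (k + b) k = filFact (k + b) / (filFact k * filFact b) := by
  induction k generalizing b with
  | zero =>
    have : (filFact b : ℚ) ≠ 0 := by exact_mod_cast (filFact_pos b).ne'
    simp [fibnom, filFact]
    rw [div_self]
    simpa [filFact] using this
  | succ k ih =>
    have h := ih (b + 1)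
    have e : k + 1 + b = k + (b + 1) := by ring
    rw [e]
    have h2 : fibnom (k + (b + 1)) (k + 1) = fibnom (k + (b + 1)) k *
      ((Nat.fib (k + (b + 1) - k) : ℚ) / Nat.fib (k + 1)) := Finset.prod_range_succ _ _
    rw [h2, h, filFact_succ b, filFact_succ k, Nat.add_sub_cancel_left]
    have h3 := fil_fib_ne b
    have h4 := fil_fib_ne k
    have h5 : (filFact b : ℚ) ≠ 0 := by exact_mod_cast (filFact_pos b).ne'
    have h6 : (filFact k : ℚ) ≠ 0 := by exact_mod_cast (filFact_pos k).ne'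
    push_cast
    field_simp

lemma fibnom_int (m k : ℕ) : ∃ z : ℤ, fibnom m k = z := by
  induction m generalizing k with
  | zero =>
    cases k with
    | zero => exact ⟨1, by simp [fibnom]⟩
    | succ k => exact ⟨0, by simp [fibnom, Finset.prod_range_succ']⟩
  | succ m ih =>
    cases k with
    | zero => exact ⟨1, by simp [fibnom]⟩
    | succ k =>
      rcases Nat.lt_or_ge m k with h | h
      · refine ⟨0, ?_⟩
        rw [fibnom, Finset.prod_eq_zero (i := m + 1)]
        · simp
        · simp; omega
        · simp
      · obtain ⟨z1, h1⟩ := ih k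
        obtain ⟨z2, h2⟩ := ih (k + 1)
        refine ⟨Nat.fib (m - k + 1) * z1 + Nat.fib k * z2, ?_⟩
        push_cast
        rw [← h1, ← h2]
        have e1 : fibnom m (k + 1) = fibnom m k * ((Nat.fib (m - k) : ℚ) / Nat.fib (k + 1)) :=
          Finset.prod_range_succ _ _
        have e2 : fibnom (m + 1) (k + 1) = fibnom m k * ((Nat.fib (m + 1) : ℚ) / Nat.fib (k + 1)) := by
          unfold fibnom
          rw [Finset.prod_div_distrib, Finset.prod_div_distrib, Finset.prod_range_succ',
            Finset.prod_range_succ (fun i => (Nat.fib (i + 1) : ℚ))]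
          simp only [Nat.add_sub_add_right, Nat.sub_zero]
          rw [mul_div_mul_comm]
        obtain ⟨r, rfl⟩ := Nat.exists_eq_add_of_le h
        rw [e1, e2, Nat.fib_add, Nat.add_sub_cancel_left]
        have h4 := fil_fib_ne k
        push_cast
        field_simp
        ring

lemma fil_prod_erase (f : ℕ → ℝ) (k m : ℕ) :
    ∏ i ∈ (Finset.range (k + m + 1)).erase k, f i =
      (∏ i ∈ Finset.range k, f i) * ∏ i ∈ Finset.range m, f (k + (i + 1)) := by
  have h : ∏ i ∈ (Finset.range (k + m + 1)).erase k, f i =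
      ∏ i ∈ Finset.range (k + m + 1), Function.update f k 1 i := by
    rw [← Finset.mul_prod_erase _ _ (Finset.mem_range.2 (show k < k + m + 1 by omega))]
    rw [Function.update_self, one_mul]
    refine Finset.prod_congr rfl fun i hi => ?_
    rw [Function.update_of_ne (Finset.ne_of_mem_erase hi)]
  rw [h, add_assoc, Finset.prod_range_add, Finset.prod_range_succ']
  simp only [add_zero, Function.update_self, mul_one]
  congr 1
  · refine Finset.prod_congr rfl fun i hi => ?_
    rw [Function.update_of_ne (Finset.mem_range.1 hi).ne]
  · refine Finset.prod_congr rfl fun i hi => ?_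
    rw [Function.update_of_ne (by omega)]

/-- Triangular sum. -/
def filE (k : ℕ) : ℕ := ∑ i ∈ Finset.range k, i

lemma fil_prodG (k m : ℕ) :
    ∏ i ∈ (Finset.range (k + m + 1)).erase k, filG k i =
      (-1) ^ (filE k) * (-1) ^ ((k + 1) * m) * filFact k * filFact m := by
  rw [fil_prod_erase]
  have h1 : ∏ i ∈ Finset.range k, filG k i = (-1) ^ (filE k) * filFact k := by
    have : ∀ i ∈ Finset.range k, filG k i = (-1) ^ i * (Nat.fib (k - 1 - i + 1) : ℝ) := by
      intro i hi
      have hi := Finset.mem_range.1 hi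
      rw [← filG_add]
      congr 1
      omega
    rw [Finset.prod_congr rfl this, Finset.prod_mul_distrib, Finset.prod_pow_eq_pow_sum,
      Finset.prod_range_reflect (fun i => (Nat.fib (i + 1) : ℝ)) k, filE, filFact]
    push_cast
    rfl
  have h2 : ∏ i ∈ Finset.range m, filG k (k + (i + 1)) = (-1) ^ ((k + 1) * m) * filFact m := by
    simp only [filG_add']
    rw [Finset.prod_mul_distrib, filFact]
    simp [pow_mul]
  rw [h1, h2]; ring

lemma fil_P (n k : ℕ) : (∏ i ∈ Finset.range (n + 1), (Nat.fib (k + i + 1) : ℝ)) * filFact k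
    = filFact (n + k + 1) := by
  unfold filFact
  rw [show n + k + 1 = k + (n + 1) by ring, Finset.prod_range_add _ k]
  push_cast
  rw [mul_comm]

lemma fil_identity (n l j : ℕ) (hl : l ≤ n) (hj : j ≤ n) :
    (if l = j then (-1) ^ n * ∏ i ∈ (Finset.range (n + 1)).erase j, filG j i else 0) =
    ∑ k ∈ Finset.range (n + 1),
      (∏ i ∈ (Finset.range (n + 1)).erase l, (Nat.fib (k + i + 1) : ℝ)) *
      ((∏ i ∈ (Finset.range (n + 1)).erase k, (Nat.fib (j + i + 1) : ℝ)) /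
        ∏ i ∈ (Finset.range (n + 1)).erase k, filG k i) := by
  have hs5 : (√5 : ℝ) ≠ 0 := by positivity
  have hlm : l ∈ Finset.range (n + 1) := by simp; omega
  have hjm : j ∈ Finset.range (n + 1) := by simp; omega
  have key := fil_lagrange (fun k => Real.goldenRatio ^ k) (fun k => Real.goldenConj ^ k)
    (fun k => pow_ne_zero _ Real.goldenRatio_ne_zero) (Finset.range (n + 1))
    (fun k _ i _ hik => by
      intro h
      apply filG_ne k i hik
      rw [filG, h, zero_div])
    (Real.goldenConj ^ (j + 1)) (Real.goldenRatio ^ (j + 1))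
    (pow_ne_zero _ Real.goldenConj_ne_zero) ((Finset.range (n + 1)).erase l)
    (fun i => Real.goldenRatio ^ (i + 1) / √5) (fun i => - Real.goldenConj ^ (i + 1) / √5)
    (by rw [Finset.card_erase_of_mem hlm]; simp)
  have hc : ∀ k ∈ Finset.range (n + 1), ((Finset.range (n + 1)).erase k).card = n := by
    intro k hk; rw [Finset.card_erase_of_mem hk]; simp
  have hneg : ∀ k ∈ Finset.range (n + 1), ∀ f : ℕ → ℝ,
      ∏ i ∈ (Finset.range (n + 1)).erase k, (- f i) =
        (-1) ^ n * ∏ i ∈ (Finset.range (n + 1)).erase k, f i := by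
    intro k hk f
    rw [Finset.prod_neg, hc k hk]
  have hL : ∀ i, Real.goldenRatio ^ (i + 1) / √5 * Real.goldenConj ^ (j + 1) +
      - Real.goldenConj ^ (i + 1) / √5 * Real.goldenRatio ^ (j + 1) = filG j i := by
    intro i
    have : filG j i = filG j i * (- (Real.goldenRatio * Real.goldenConj)) := by
      rw [Real.goldenRatio_mul_goldenConj]; ring
    rw [this, filG]
    ring
  have hF : ∀ k i : ℕ, Real.goldenRatio ^ (i + 1) / √5 * Real.goldenRatio ^ k +
      - Real.goldenConj ^ (i + 1) / √5 * Real.goldenConj ^ k = (Nat.fib (k + i + 1) : ℝ) := by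
    intro k i
    rw [Real.coe_fib_eq]
    ring
  have hR : ∀ k i : ℕ, (Real.goldenConj ^ (j + 1) * Real.goldenConj ^ i -
      Real.goldenRatio ^ (j + 1) * Real.goldenRatio ^ i) /
      (Real.goldenRatio ^ k * Real.goldenConj ^ i - Real.goldenRatio ^ i * Real.goldenConj ^ k) =
      - ((Nat.fib (j + i + 1) : ℝ) / filG k i) := by
    intro k i
    rw [Real.coe_fib_eq, filG, div_div_div_cancel_right₀ hs5, ← neg_div]
    congr 1
    ring
  simp only [hL, hF, hR] at key
  have h2 : ∏ i ∈ (Finset.range (n + 1)).erase l, filG j i =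
      (if l = j then ∏ i ∈ (Finset.range (n + 1)).erase j, filG j i else 0) := by
    split_ifs with h
    · rw [h]
    · exact Finset.prod_eq_zero (i := j) (Finset.mem_erase.2 ⟨Ne.symm h, hjm⟩) (by simp [filG])
  rw [h2] at key
  have h3 : ((-1 : ℝ) ^ n) * (-1) ^ n = 1 := by rw [← mul_pow]; simp
  calc _ = (-1) ^ n * (if l = j then ∏ i ∈ (Finset.range (n + 1)).erase j, filG j i else 0) := by
        split_ifs <;> simp
    _ = _ := by
      rw [key, Finset.mul_sum]
      refine Finset.sum_congr rfl fun k hk => ?_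
      rw [hneg k hk, Finset.prod_div_distrib]
      linear_combination ((∏ i ∈ (Finset.range (n + 1)).erase l, (Nat.fib (k + i + 1) : ℝ)) *
      ((∏ i ∈ (Finset.range (n + 1)).erase k, (Nat.fib (j + i + 1) : ℝ)) /
        ∏ i ∈ (Finset.range (n + 1)).erase k, filG k i)) * h3

lemma filE_int (k : ℕ) : ((k : ℤ) * ((k : ℤ) - 1) / 2) = (filE k : ℤ) := by
  have h := Finset.sum_range_id_mul_two k
  apply Int.ediv_eq_of_eq_mul_left (by norm_num)
  unfold filE
  cases k with
  | zero => simp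
  | succ k =>
    rw [Nat.add_sub_cancel] at h
    have h' : (((∑ i ∈ Finset.range (k + 1), i : ℕ) : ℤ)) * 2 = ((k + 1 : ℕ) : ℤ) * k := by
      exact_mod_cast h
    rw [h']; push_cast; ring

lemma fil_sign (n l j : ℕ) : (-1 : ℚ) ^ ((n * (l + j + 1) : ℤ) - l * (l - 1) / 2 -
          j * (j - 1) / 2) = (-1) ^ (n * (l + j + 1)) * (-1) ^ filE l * (-1) ^ filE j := by
  rw [filE_int, filE_int, zpow_sub₀ (by norm_num), zpow_sub₀ (by norm_num), zpow_natCast,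
    zpow_natCast]
  have : (n * (l + j + 1) : ℤ) = ((n * (l + j + 1) : ℕ) : ℤ) := by push_cast; ring
  rw [this, zpow_natCast]
  have h : ∀ e : ℕ, ((-1 : ℚ) ^ e)⁻¹ = (-1) ^ e := by
    intro e; rw [← inv_pow]; norm_num
  rw [div_eq_mul_inv, div_eq_mul_inv, h, h]

lemma fil_fibnoms (n l j : ℕ) (hl : l ≤ n) (hj : j ≤ n) :
    (Nat.fib (l + j + 1) : ℚ) * (fibnom (n + l + 1) (n - j) * fibnom (n + j + 1) (n - l) *
          fibnom (l + j) l * fibnom (l + j) j) =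
    (filFact (n + l + 1) / (filFact l ^ 2 * filFact (n - l))) *
    (filFact (n + j + 1) / (filFact j ^ 2 * filFact (n - j))) / Nat.fib (l + j + 1) := by
  have h1 := fibnom_fact (l + j + 1) (n - j)
  have h2 := fibnom_fact (l + j + 1) (n - l)
  have h3 := fibnom_fact j l
  have h4 := fibnom_fact l j
  rw [show n - j + (l + j + 1) = n + l + 1 by omega] at h1
  rw [show n - l + (l + j + 1) = n + j + 1 by omega] at h2
  rw [add_comm j l] at h4
  rw [h1, h2, h3, h4, filFact_succ (l + j)]
  have hp : ∀ m, (filFact m : ℚ) ≠ 0 := fun m => by exact_mod_cast (filFact_pos m).ne'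
  have := hp l
  have := hp j
  have := hp (n - l)
  have := hp (n - j)
  have := hp (l + j)
  have := fil_fib_ne (l + j)
  push_cast
  field_simp

lemma fil_B (n l j : ℕ) (hl : l ≤ n) (hj : j ≤ n) :
    (((-1 : ℚ) ^ ((n * (l + j + 1) : ℤ) - l * (l - 1) / 2 - j * (j - 1) / 2) *
      (Nat.fib (l + j + 1) : ℚ) * (fibnom (n + l + 1) (n - j) * fibnom (n + j + 1) (n - l) *
          fibnom (l + j) l * fibnom (l + j) j) : ℚ) : ℝ) =
    (-1) ^ n * ((∏ i ∈ Finset.range (n + 1), (Nat.fib (l + i + 1) : ℝ)) /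
        ∏ i ∈ (Finset.range (n + 1)).erase l, filG l i) *
      ((∏ i ∈ Finset.range (n + 1), (Nat.fib (j + i + 1) : ℝ)) /
        ∏ i ∈ (Finset.range (n + 1)).erase j, filG j i) / Nat.fib (l + j + 1) := by
  have hp : ∀ m, (filFact m : ℝ) ≠ 0 := fun m => by exact_mod_cast (filFact_pos m).ne'
  have hG : ∀ k, k ≤ n → (∏ i ∈ Finset.range (n + 1), (Nat.fib (k + i + 1) : ℝ)) /
        ∏ i ∈ (Finset.range (n + 1)).erase k, filG k i = (-1) ^ (filE k + (k + 1) * (n - k)) *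
        ((filFact (n + k + 1) : ℝ) / (filFact k ^ 2 * filFact (n - k))) := by
    intro k hk
    obtain ⟨m, rfl⟩ := Nat.exists_eq_add_of_le hk
    rw [fil_prodG, ← fil_P, Nat.add_sub_cancel_left, pow_add]
    have := hp k
    have := hp m
    have hs : ∀ e : ℕ, ((-1 : ℝ) ^ e) * (-1) ^ e = 1 := by
      intro e; rw [← mul_pow]; simp
    have e1 := hs (filE k)
    have e2 := hs ((k + 1) * m)
    have h1 : ((-1 : ℝ) ^ filE k) ≠ 0 := by simp
    have h2 : ((-1 : ℝ) ^ ((k + 1) * m)) ≠ 0 := by simp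
    generalize ((-1 : ℝ) ^ filE k) = u at *
    generalize ((-1 : ℝ) ^ ((k + 1) * m)) = w at *
    field_simp
    rw [pow_two, pow_two, e1, e2]
    simp
  have hsg : ∀ k, k ≤ n → (-1 : ℝ) ^ (filE k + (k + 1) * (n - k)) =
      (-1) ^ n * (-1) ^ (n * k) * (-1) ^ filE k := by
    intro k hk
    obtain ⟨m, rfl⟩ := Nat.exists_eq_add_of_le hk
    rw [Nat.add_sub_cancel_left, ← pow_add, ← pow_add]
    have hev : Even ((k + m) + (k + m) * k + (k + 1) * m) := by
      rw [show (k + m) + (k + m) * k + (k + 1) * m = k * (k + 1) + 2 * ((k + 1) * m) by ring]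
      exact (Nat.even_mul_succ_self k).add (even_two_mul _)
    have h1 : (-1 : ℝ) ^ ((k + m) + (k + m) * k + (k + 1) * m) = 1 := hev.neg_one_pow
    rw [pow_add] at h1
    have h2 : ((-1 : ℝ) ^ ((k + 1) * m)) * (-1) ^ ((k + 1) * m) = 1 := by rw [← mul_pow]; simp
    rw [pow_add, pow_add _ _ (filE k)]
    linear_combination ((-1 : ℝ) ^ filE k) * (-(-1 : ℝ) ^ ((k + 1) * m)) * h1 +
      ((-1 : ℝ) ^ filE k) * (-1) ^ (k + m + (k + m) * k) * h2
  rw [mul_assoc, fil_sign, fil_fibnoms n l j hl hj, hG l hl, hG j hj, hsg l hl, hsg j hj]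
  have h3 : ((-1 : ℝ) ^ n) * (-1) ^ n = 1 := by rw [← mul_pow]; simp
  rw [show n * (l + j + 1) = n * l + n * j + n by ring, pow_add, pow_add]
  push_cast
  linear_combination (-((-1) ^ n * (-1) ^ (n * l) * (-1) ^ filE l * (-1) ^ (n * j) * (-1) ^ filE j *
    ((filFact (n + l + 1) : ℝ) / (filFact l ^ 2 * filFact (n - l))) *
    ((filFact (n + j + 1) : ℝ) / (filFact j ^ 2 * filFact (n - j))) / Nat.fib (l + j + 1))) * h3

theorem inverse_Filbert_matrix (n : ℕ) (A B : Matrix (Fin (n + 1)) (Fin (n + 1)) ℚ)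
    (hA : ∀ l j : Fin (n + 1), A l j = 1 / (Nat.fib ((l : ℕ) + (j : ℕ) + 1) : ℚ))
    (hB : ∀ l j : Fin (n + 1), B l j =
      (-1 : ℚ) ^ ((n * ((l : ℕ) + (j : ℕ) + 1) : ℤ) - (l : ℕ) * ((l : ℕ) - 1) / 2 -
          (j : ℕ) * ((j : ℕ) - 1) / 2) *
        (Nat.fib ((l : ℕ) + (j : ℕ) + 1) : ℚ) *
        (fibnom (n + (l : ℕ) + 1) (n - (j : ℕ)) * fibnom (n + (j : ℕ) + 1) (n - (l : ℕ)) *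
          fibnom ((l : ℕ) + (j : ℕ)) (l : ℕ) * fibnom ((l : ℕ) + (j : ℕ)) (j : ℕ))) :
    (A * B = 1 ∧ B * A = 1) ∧ ∀ l j : Fin (n + 1), ∃ z : ℤ, B l j = z := by
  have hAB : A * B = 1 := by
    ext l j
    have hl : (l : ℕ) ≤ n := Nat.lt_succ_iff.1 l.2
    have hj : (j : ℕ) ≤ n := Nat.lt_succ_iff.1 j.2
    have hlm : (l : ℕ) ∈ Finset.range (n + 1) := Finset.mem_range.2 (Fin.is_lt _)
    have hjm : (j : ℕ) ∈ Finset.range (n + 1) := Finset.mem_range.2 (Fin.is_lt _)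
    have hG : ∀ k : ℕ, ∏ i ∈ (Finset.range (n + 1)).erase k, filG k i ≠ 0 := fun k =>
      Finset.prod_ne_zero_iff.2 fun i hi => filG_ne k i (Finset.ne_of_mem_erase hi)
    have key := fil_identity n l j hl hj
    have h3 : ((-1 : ℝ) ^ n) * (-1) ^ n = 1 := by rw [← mul_pow]; simp
    have hP : ∀ k a : ℕ, a ∈ Finset.range (n + 1) →
        ∏ i ∈ Finset.range (n + 1), (Nat.fib (k + i + 1) : ℝ) = Nat.fib (k + a + 1) *
        ∏ i ∈ (Finset.range (n + 1)).erase a, (Nat.fib (k + i + 1) : ℝ) := fun k a ha =>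
      (Finset.mul_prod_erase _ _ ha).symm
    have main : (((A * B) l j : ℚ) : ℝ) = (-1) ^ n / (∏ i ∈ (Finset.range (n + 1)).erase (j : ℕ), filG j i) *
        (if (l : ℕ) = j then (-1) ^ n * ∏ i ∈ (Finset.range (n + 1)).erase (j : ℕ), filG j i else 0) := by
      rw [key, Matrix.mul_apply, Rat.cast_sum, Finset.mul_sum, Finset.sum_range]
      refine Finset.sum_congr rfl fun k _ => ?_
      have hkm : (k : ℕ) ∈ Finset.range (n + 1) := Finset.mem_range.2 (Fin.is_lt _)
      rw [Rat.cast_mul, hA, hB, fil_B n k j (Nat.lt_succ_iff.1 k.2) hj, hP k l hlm, hP j k hkm,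
        add_comm (j : ℕ) k, add_comm (l : ℕ) k]
      have := fil_fib_neR ((k : ℕ) + l)
      have := fil_fib_neR ((k : ℕ) + j)
      have := hG k
      have := hG j
      push_cast
      field_simp
    have : (((A * B) l j : ℚ) : ℝ) = (((1 : Matrix (Fin (n + 1)) (Fin (n + 1)) ℚ) l j : ℚ) : ℝ) := by
      rw [main, Matrix.one_apply]
      by_cases h : l = j
      · subst h
        have := hG l
        simp only [if_true]
        field_simp
        rw [pow_two, h3]
        simp
      · have h' : (l : ℕ) ≠ j := fun e => h (Fin.ext e)
        simp [h, h']
    exact_mod_cast this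
  refine ⟨⟨hAB, mul_eq_one_comm.1 hAB⟩, fun l j => ?_⟩
  obtain ⟨a, ha⟩ := fibnom_int (n + (l : ℕ) + 1) (n - (j : ℕ))
  obtain ⟨b, hb⟩ := fibnom_int (n + (j : ℕ) + 1) (n - (l : ℕ))
  obtain ⟨c, hc⟩ := fibnom_int ((l : ℕ) + (j : ℕ)) (l : ℕ)
  obtain ⟨d, hd⟩ := fibnom_int ((l : ℕ) + (j : ℕ)) (j : ℕ)
  rw [hB, fil_sign, ha, hb, hc, hd]
  exact ⟨(-1) ^ (n * ((l : ℕ) + j + 1)) * (-1) ^ filE l * (-1) ^ filE j *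
    (Nat.fib ((l : ℕ) + j + 1) : ℤ) * (a * b * c * d), by push_cast; ring⟩
end
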